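/- arXiv:1405.3698 — 2 statements merged into one kernel-verified Lean document; each statement's English description precedes it below -/
import Mathlib

section
/- For all vectors v, w ∈ ℝ⁷, the identity (1/3!) · (ι_v φ₀) ∧ (ι_w φ₀) ∧ φ₀ = g₀(v,w) · 𝒱 holds, where g₀ is the standard Euclidean inner product and 𝒱 = dx₁ ∧ ⋯ ∧ dx₇ is the standard volume form. In particular the bilinear form 𝔅₀ defined by this equation is positive definite. -/
noncomputable section

open scoped BigOperators

def pickCoords {n k : ℕ} (idx : Fin k → Fin n) : (Fin n → ℝ) →ₗ[ℝ] (Fin k → ℝ) :=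
  LinearMap.pi fun a => LinearMap.proj (idx a)

def dxs {n k : ℕ} (idx : Fin k → Fin n) : (Fin n → ℝ) [⋀^Fin k]→ₗ[ℝ] ℝ :=
  (Matrix.detRowAlternating).compLinearMap (pickCoords idx)

/-- The standard `G₂` three-form on `ℝ⁷` (with `0`-based indices). -/
def phi0 : (Fin 7 → ℝ) [⋀^Fin 3]→ₗ[ℝ] ℝ :=
  dxs ![0,1,2] + dxs ![0,3,4] + dxs ![0,5,6] + dxs ![1,3,5]
    - dxs ![1,4,6] - dxs ![2,3,6] - dxs ![2,4,5]

/-- Wedge product of scalar-valued alternating forms. -/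
def wedgeAM {V : Type*} [AddCommGroup V] [Module ℝ V] {k l : ℕ}
    (α : V [⋀^Fin k]→ₗ[ℝ] ℝ) (β : V [⋀^Fin l]→ₗ[ℝ] ℝ) : V [⋀^Fin (k + l)]→ₗ[ℝ] ℝ :=
  (TensorProduct.lid ℝ ℝ).toLinearMap.compAlternatingMap
    ((α.domCoprod β).domDomCongr finSumFinEquiv)

/-- The standard volume form `dx₁ ∧ ⋯ ∧ dx₇` on `ℝ⁷`. -/
def vol7 : (Fin 7 → ℝ) [⋀^Fin 7]→ₗ[ℝ] ℝ := Matrix.detRowAlternating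

/-!
Ordering the indices within each monomial so as to absorb the signs, `φ₀` becomes the plain sum of
`dx_a ∧ dx_b ∧ dx_c` over the seven oriented lines `(a, b, c)` of a Fano plane, and `ι_v φ₀` the sum
of `v_a dx_b ∧ dx_c` over its 21 flags, `(b, c)` being the rest of the line in cyclic order. So
`(ι_v φ₀) ∧ (ι_w φ₀) ∧ φ₀` is a sum of monomials, one for each pair of flags and line, and such a
monomial is nonzero only if its indices exhaust the seven points.

Identify the points with the nonzero vectors of `𝔽₂³`, so that lines sum to zero. The indices of a
monomial then sum to `a + a'`, where `a`, `a'` are the points of the two flags, while all seven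
vectors sum to zero: a nonzero monomial has `a = a'`, which kills the off-diagonal coefficients.
Since any two lines meet, the three lines of a nonzero monomial are moreover the three lines through
`a`. All these monomials equal `+𝒱`, and the lines through `a` can be ordered in `3!` ways.
-/

section WedgeBilinearity

variable {V : Type*} [AddCommGroup V] [Module ℝ V] {k l : ℕ}

/-- The wedge product `wedgeAM` bundled as a bilinear map, to make the `map_sum` and `map_smul`
lemmas available for it. -/
def wedgeBilin :
    (V [⋀^Fin k]→ₗ[ℝ] ℝ) →ₗ[ℝ] (V [⋀^Fin l]→ₗ[ℝ] ℝ) →ₗ[ℝ] V [⋀^Fin (k + l)]→ₗ[ℝ] ℝ :=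
  (TensorProduct.mk ℝ _ _).compr₂
    (LinearMap.compAlternatingMapₗ ℝ (TensorProduct.lid ℝ ℝ).toLinearMap ∘ₗ
      (AlternatingMap.domDomCongrₗ ℝ finSumFinEquiv).toLinearMap ∘ₗ AlternatingMap.domCoprod')

theorem wedgeAM_sum_left {ι : Type*} (s : Finset ι) (α : ι → V [⋀^Fin k]→ₗ[ℝ] ℝ)
    (β : V [⋀^Fin l]→ₗ[ℝ] ℝ) :
    wedgeAM (∑ i ∈ s, α i) β = ∑ i ∈ s, wedgeAM (α i) β :=
  wedgeBilin.map_sum₂ s α β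

theorem wedgeAM_sum_right {ι : Type*} (s : Finset ι) (α : V [⋀^Fin k]→ₗ[ℝ] ℝ)
    (β : ι → V [⋀^Fin l]→ₗ[ℝ] ℝ) :
    wedgeAM α (∑ i ∈ s, β i) = ∑ i ∈ s, wedgeAM α (β i) :=
  map_sum (wedgeBilin α) β s

theorem wedgeAM_smul_left (c : ℝ) (α : V [⋀^Fin k]→ₗ[ℝ] ℝ) (β : V [⋀^Fin l]→ₗ[ℝ] ℝ) :
    wedgeAM (c • α) β = c • wedgeAM α β :=
  wedgeBilin.map_smul₂ c α β

theorem wedgeAM_smul_right (c : ℝ) (α : V [⋀^Fin k]→ₗ[ℝ] ℝ) (β : V [⋀^Fin l]→ₗ[ℝ] ℝ) :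
    wedgeAM α (c • β) = c • wedgeAM α β :=
  map_smul (wedgeBilin α) c β

end WedgeBilinearity

section CoordinateForms

variable {n k l : ℕ}

theorem dxs_apply (I : Fin k → Fin n) (m : Fin k → Fin n → ℝ) :
    dxs I m = ((Matrix.of m).submatrix id I).det := rfl

theorem dxs_eq_alternatization (I : Fin k → Fin n) :
    dxs I = MultilinearMap.alternatization
      ((MultilinearMap.mkPiAlgebra ℝ (Fin k) ℝ).compLinearMap fun a => LinearMap.proj (I a)) := by
  ext m
  rw [dxs_apply, Matrix.det_apply, MultilinearMap.alternatization_apply]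
  rfl

theorem wedgeAM_dxs_dxs (I : Fin k → Fin n) (J : Fin l → Fin n) :
    wedgeAM (dxs I) (dxs J) = dxs (Fin.append I J) := by
  ext m
  rw [dxs_apply, ← Matrix.det_submatrix_equiv_self finSumFinEquiv, Matrix.det_apply]
  simp only [wedgeAM, dxs_eq_alternatization, ← MultilinearMap.domCoprod_alternization,
    LinearMap.compAlternatingMap_apply, AlternatingMap.domDomCongr_apply,
    MultilinearMap.alternatization_apply, map_sum]
  refine Finset.sum_congr rfl fun σ _ => ?_
  rcases Int.units_eq_one_or (Equiv.Perm.sign σ) with h | h <;>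
    simp [h, Fintype.prod_sum_type]

theorem curryLeft_dxs_three (I : Fin 3 → Fin n) (v : Fin n → ℝ) :
    (dxs I).curryLeft v = ∑ p, v (I p) • dxs ![I (p + 1), I (p + 2)] := by
  ext m
  simp only [AlternatingMap.curryLeft_apply_apply, AlternatingMap.add_apply,
    AlternatingMap.smul_apply, dxs_apply, Matrix.det_fin_three, Matrix.det_fin_two,
    Matrix.submatrix_apply, Matrix.of_apply, Matrix.cons_val, id_eq, Fin.sum_univ_three,
    Fin.reduceAdd, smul_eq_mul]
  ring

theorem dxs_eq_zero_of_not_injective {I : Fin k → Fin n} (hI : ¬ Function.Injective I) :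
    dxs I = 0 := by
  obtain ⟨a, b, hab, hne⟩ := Function.not_injective_iff.1 hI
  ext m
  exact Matrix.det_zero_of_column_eq hne fun i => congrArg (m i) hab

theorem dxs_eq_det_smul (I : Fin n → Fin n) :
    dxs I = ((1 : Matrix (Fin n) (Fin n) ℝ).submatrix I id).det • Matrix.detRowAlternating := by
  ext m
  have factor : (Matrix.of m).submatrix id I =
      Matrix.of m * ((1 : Matrix (Fin n) (Fin n) ℝ).submatrix I id).transpose := by
    simpa using Matrix.submatrix_mul (Matrix.of m) 1 id id I Function.bijective_id
  rw [dxs_apply, factor, Matrix.det_mul, Matrix.det_transpose, mul_comm]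
  rfl

-- For injective `I` the determinant is the sign of `I`: dividing Vandermonde determinants turns it
-- into a product of integers, which `decide` can evaluate.
theorem det_one_submatrix_mul_superFactorial (I : Fin (n + 1) → Fin (n + 1)) :
    ((1 : Matrix (Fin (n + 1)) (Fin (n + 1)) ℝ).submatrix I id).det * n.superFactorial =
      ∏ i, ∏ j ∈ Finset.Ioi i, ((I j : ℝ) - I i) := by
  have factor : Matrix.vandermonde (fun i => (I i : ℝ)) =
      (1 : Matrix (Fin (n + 1)) (Fin (n + 1)) ℝ).submatrix I id *
        Matrix.vandermonde (fun i : Fin (n + 1) => (i : ℝ)) := by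
    rw [← Matrix.submatrix_id_id (Matrix.vandermonde fun i : Fin (n + 1) => (i : ℝ)),
      ← Matrix.submatrix_mul _ _ _ _ _ Function.bijective_id, one_mul]
    rfl
  rw [← Matrix.det_vandermonde, factor, Matrix.det_mul,
    Matrix.det_vandermonde_id_eq_superFactorial]

theorem dxs_eq_detRowAlternating_of_prod_sub_eq {I : Fin (n + 1) → Fin (n + 1)}
    (hI : ∏ i, ∏ j ∈ Finset.Ioi i, ((I j : ℤ) - I i) = n.superFactorial) :
    dxs I = Matrix.detRowAlternating := by
  have superFactorial_ne_zero : (n.superFactorial : ℝ) ≠ 0 := by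
    rw [← Matrix.det_vandermonde_id_eq_superFactorial, Matrix.det_vandermonde_ne_zero_iff]
    exact Nat.cast_injective.comp Fin.val_injective
  have det_eq_one : ((1 : Matrix (Fin (n + 1)) (Fin (n + 1)) ℝ).submatrix I id).det = 1 := by
    rw [← mul_eq_right₀ superFactorial_ne_zero, det_one_submatrix_mul_superFactorial]
    exact_mod_cast hI
  rw [dxs_eq_det_smul, det_eq_one, one_smul]

end CoordinateForms

/-- The oriented lines of the Fano plane on the points `0, …, 6`. Each carries the indices of one
monomial of `phi0`, ordered so that the monomial has coefficient `+1`. -/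
def fanoLine : Fin 7 → Fin 3 → Fin 7 :=
  ![![0, 1, 2], ![0, 3, 4], ![0, 5, 6], ![1, 3, 5], ![1, 6, 4], ![2, 6, 3], ![2, 5, 4]]

/-- The flags (incident point-line pairs) of the Fano plane: `(t, p)` stands for the line
`fanoLine t` together with its `p`-th point. -/
abbrev FanoFlag : Type := Fin 7 × Fin 3

namespace FanoFlag

/-- The point of a flag. -/
def point (x : FanoFlag) : Fin 7 := fanoLine x.1 x.2

/-- The other two points on the line of a flag, in the cyclic order of that line. -/
def otherPoints (x : FanoFlag) : Fin 2 → Fin 7 :=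
  ![fanoLine x.1 (x.2 + 1), fanoLine x.1 (x.2 + 2)]

end FanoFlag

theorem phi0_eq_sum_dxs_fanoLine : phi0 = ∑ r, dxs (fanoLine r) := by
  ext m
  simp only [phi0, fanoLine, AlternatingMap.add_apply, AlternatingMap.sub_apply, dxs_apply,
    Matrix.det_fin_three, Matrix.submatrix_apply, Matrix.of_apply, Matrix.cons_val, id_eq,
    Fin.sum_univ_seven]
  ring

theorem curryLeft_phi0 (v : Fin 7 → ℝ) :
    phi0.curryLeft v = ∑ x : FanoFlag, v x.point • dxs x.otherPoints := by
  have curryLeft_sum : phi0.curryLeft v = ∑ r, (dxs (fanoLine r)).curryLeft v := by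
    rw [phi0_eq_sum_dxs_fanoLine, ← AlternatingMap.curryLeftLinearMap_apply, map_sum,
      LinearMap.sum_apply]
    rfl
  simp only [curryLeft_sum, curryLeft_dxs_three, Fintype.sum_prod_type, FanoFlag.point,
    FanoFlag.otherPoints]

/-- The seven indices of the monomial which two flags and a line contribute to
`(ι_v φ₀) ∧ (ι_w φ₀) ∧ φ₀`. -/
def flagIndices (x y : FanoFlag) (r : Fin 7) : Fin 7 → Fin 7 :=
  Fin.append (Fin.append x.otherPoints y.otherPoints) (fanoLine r)

theorem wedgeAM_dxs_otherPoints (x y : FanoFlag) (r : Fin 7) :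
    wedgeAM (wedgeAM (dxs x.otherPoints) (dxs y.otherPoints)) (dxs (fanoLine r)) =
      dxs (flagIndices x y r) := by
  rw [wedgeAM_dxs_dxs, wedgeAM_dxs_dxs]
  rfl

theorem wedgeAM_curryLeft_phi0 (v w : Fin 7 → ℝ) :
    wedgeAM (wedgeAM (phi0.curryLeft v) (phi0.curryLeft w)) phi0 =
      ∑ x : FanoFlag, ∑ y : FanoFlag, ∑ r, (v x.point * w y.point) • dxs (flagIndices x y r) := by
  have expand_flags : wedgeAM (phi0.curryLeft v) (phi0.curryLeft w) =
      ∑ x : FanoFlag, ∑ y : FanoFlag,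
        (v x.point * w y.point) • wedgeAM (dxs x.otherPoints) (dxs y.otherPoints) := by
    simp only [curryLeft_phi0, wedgeAM_sum_left, wedgeAM_smul_left]
    simp only [wedgeAM_sum_right, wedgeAM_smul_right, Finset.smul_sum, smul_smul]
  rw [expand_flags, phi0_eq_sum_dxs_fanoLine]
  simp only [wedgeAM_sum_left, wedgeAM_smul_left]
  simp only [wedgeAM_sum_right, wedgeAM_dxs_otherPoints, Finset.smul_sum]

/-- The points of the Fano plane as nonzero vectors of `𝔽₂³`: the point `i` is the vector of
binary digits of `i + 1`. -/
def fanoVector (i : Fin 7) (b : Fin 3) : ZMod 2 := (((i : ℕ) + 1) / 2 ^ (b : ℕ) : ℕ)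

theorem fanoVector_injective : Function.Injective fanoVector := by
  decide +kernel

theorem sum_fanoVector : ∑ i, fanoVector i = 0 := by
  decide +kernel

theorem sum_fanoVector_fanoLine (r : Fin 7) : ∑ p, fanoVector (fanoLine r p) = 0 := by
  decide +revert +kernel

theorem sum_fanoVector_otherPoints (x : FanoFlag) :
    ∑ a, fanoVector (x.otherPoints a) = fanoVector x.point := by
  decide +revert +kernel

theorem point_eq_of_injective_flagIndices {x y : FanoFlag} {r : Fin 7}
    (h : Function.Injective (flagIndices x y r)) : x.point = y.point := by
  have sum_flagIndices : ∑ a, fanoVector (flagIndices x y r a) =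
      fanoVector x.point + fanoVector y.point := by
    change ∑ a : Fin (2 + 2 + 3), fanoVector (Fin.append _ _ a) = _
    simp only [Fin.sum_univ_add, Fin.append_left, Fin.append_right, sum_fanoVector_otherPoints,
      sum_fanoVector_fanoLine, add_zero]
  rw [(Finite.injective_iff_bijective.1 h).sum_comp fanoVector, sum_fanoVector] at sum_flagIndices
  exact fanoVector_injective (CharTwo.add_eq_zero.1 sum_flagIndices.symm)

theorem mem_fanoLine_of_otherPoints_ne {x : FanoFlag} {r : Fin 7}
    (h : ∀ a p, x.otherPoints a ≠ fanoLine r p) : x.1 ≠ r ∧ ∃ p, fanoLine r p = x.point := by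
  decide +revert +kernel

theorem exists_otherPoints_eq {x y : FanoFlag} (h : x.1 = y.1) :
    ∃ a b, x.otherPoints a = y.otherPoints b := by
  decide +revert +kernel

/-- The lines of the flags `x` and `y` and the line `r` are the three lines through the common
point of `x` and `y`. -/
def IsPencil (x y : FanoFlag) (r : Fin 7) : Prop :=
  x.point = y.point ∧ (∃ p, fanoLine r p = x.point) ∧ x.1 ≠ y.1 ∧ x.1 ≠ r ∧ y.1 ≠ r

instance (x y : FanoFlag) (r : Fin 7) : Decidable (IsPencil x y r) :=
  inferInstanceAs (Decidable (_ ∧ _))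

theorem isPencil_of_injective_flagIndices {x y : FanoFlag} {r : Fin 7}
    (h : Function.Injective (flagIndices x y r)) : IsPencil x y r := by
  obtain ⟨hxy, -, hxyr⟩ := Fin.append_injective_iff.1 h
  obtain ⟨-, -, hx_ne_y⟩ := Fin.append_injective_iff.1 hxy
  have hx_ne_r (a : Fin 2) (p : Fin 3) : x.otherPoints a ≠ fanoLine r p := by
    simpa only [Fin.append_left] using hxyr (Fin.castAdd 2 a) p
  have hy_ne_r (a : Fin 2) (p : Fin 3) : y.otherPoints a ≠ fanoLine r p := by
    simpa only [Fin.append_right] using hxyr (Fin.natAdd 2 a) p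
  obtain ⟨hxr, hmem⟩ := mem_fanoLine_of_otherPoints_ne hx_ne_r
  refine ⟨point_eq_of_injective_flagIndices h, hmem, fun hline => ?_, hxr,
    (mem_fanoLine_of_otherPoints_ne hy_ne_r).1⟩
  obtain ⟨a, b, hab⟩ := exists_otherPoints_eq hline
  exact hx_ne_y a b hab

theorem prod_sub_flagIndices_of_isPencil {x y : FanoFlag} {r : Fin 7} (h : IsPencil x y r) :
    ∏ i, ∏ j ∈ Finset.Ioi i, ((flagIndices x y r j : ℤ) - flagIndices x y r i) =
      Nat.superFactorial 6 := by
  decide +revert +kernel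

theorem dxs_flagIndices (x y : FanoFlag) (r : Fin 7) :
    dxs (flagIndices x y r) = if IsPencil x y r then vol7 else 0 := by
  split_ifs with h
  · exact dxs_eq_detRowAlternating_of_prod_sub_eq (prod_sub_flagIndices_of_isPencil h)
  · exact dxs_eq_zero_of_not_injective (mt isPencil_of_injective_flagIndices h)

theorem card_flags_of_point (i : Fin 7) : Finset.card {x : FanoFlag | x.point = i} = 3 := by
  decide +revert +kernel

theorem card_isPencil (x : FanoFlag) :
    Finset.card {z : FanoFlag × Fin 7 | IsPencil x z.1 z.2} = 2 := by
  decide +revert +kernel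

theorem sum_isPencil {M : Type*} [AddCommMonoid M] (f : Fin 7 → Fin 7 → M) :
    ∑ x : FanoFlag, ∑ y : FanoFlag, ∑ r, (if IsPencil x y r then f x.point y.point else 0) =
      6 • ∑ i, f i i := by
  have sum_through (x : FanoFlag) :
      ∑ y : FanoFlag, ∑ r, (if IsPencil x y r then f x.point y.point else 0) =
        2 • f x.point x.point := by
    rw [← Fintype.sum_prod_type', ← Finset.sum_filter, ← card_isPencil x]
    refine Finset.sum_eq_card_nsmul fun z hz => ?_
    rw [(Finset.mem_filter.1 hz).2.1]
  calc ∑ x : FanoFlag, ∑ y : FanoFlag, ∑ r, (if IsPencil x y r then f x.point y.point else 0)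
      = ∑ x : FanoFlag, 2 • f x.point x.point := Finset.sum_congr rfl fun x _ => sum_through x
    _ = ∑ i, 3 • 2 • f i i := by
      rw [← Finset.sum_fiberwise' _ FanoFlag.point fun i => 2 • f i i]
      simp only [Finset.sum_const, card_flags_of_point]
    _ = 6 • ∑ i, f i i := by
      simp only [smul_smul, Finset.smul_sum, Nat.reduceMul]

theorem wedgeAM_curryLeft_phi0_eq_smul_vol7 (v w : Fin 7 → ℝ) :
    wedgeAM (wedgeAM (phi0.curryLeft v) (phi0.curryLeft w)) phi0 =
      (6 * ∑ i, v i * w i) • vol7 := by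
  calc wedgeAM (wedgeAM (phi0.curryLeft v) (phi0.curryLeft w)) phi0
      = ∑ x : FanoFlag, ∑ y : FanoFlag, ∑ r,
          if IsPencil x y r then (v x.point * w y.point) • vol7 else 0 := by
        simp only [wedgeAM_curryLeft_phi0, dxs_flagIndices, smul_ite, smul_zero]
    _ = 6 • ∑ i, (v i * w i) • vol7 := sum_isPencil fun i j => (v i * w j) • vol7
    _ = (6 * ∑ i, v i * w i) • vol7 := by
        rw [← Finset.sum_smul, mul_smul, ofNat_smul_eq_nsmul ℝ]

/-- For all `v, w ∈ ℝ⁷` one has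
`(1/3!) · (ι_v φ₀) ∧ (ι_w φ₀) ∧ φ₀ = g₀(v,w) · 𝒱`, where `g₀` is the Euclidean inner product and
`𝒱` the standard volume form; in particular the bilinear form `𝔅₀` so defined is positive
definite. -/
theorem contraction_wedge_phi0 :
    (∀ v w : Fin 7 → ℝ,
      ((1 : ℝ)/6) • wedgeAM (wedgeAM (phi0.curryLeft v) (phi0.curryLeft w)) phi0
        = (∑ i, v i * w i) • vol7) ∧
    (∀ v : Fin 7 → ℝ, v ≠ 0 → ∃ c : ℝ, 0 < c ∧
      ((1 : ℝ)/6) • wedgeAM (wedgeAM (phi0.curryLeft v) (phi0.curryLeft v)) phi0 = c • vol7) := by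
  have identity (v w : Fin 7 → ℝ) :
      ((1 : ℝ)/6) • wedgeAM (wedgeAM (phi0.curryLeft v) (phi0.curryLeft w)) phi0
        = (∑ i, v i * w i) • vol7 := by
    rw [wedgeAM_curryLeft_phi0_eq_smul_vol7, smul_smul]
    congr 1
    ring
  refine ⟨identity, fun v hv => ⟨∑ i, v i * v i, ?_, identity v v⟩⟩
  obtain ⟨i, hi⟩ := Function.ne_iff.1 hv
  exact Finset.sum_pos' (fun j _ => mul_self_nonneg (v j))
    ⟨i, Finset.mem_univ i, mul_self_pos.2 hi⟩

end
end

section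
/- Let V be an 8-dimensional oriented vector space with an admissible four-form Ω. Then for every nonzero v ∈ V and every 7-dimensional subspace H ⊂ V transverse to v, the restriction (ι_v Ω)|_H is a positive three-form on H (with H oriented by the orientation of V and v). -/
noncomputable section

open scoped RealInnerProductSpace BigOperators

/-- The Cayley four-form `Ω₀` on `ℝ⁸` (with `0`-based indices). -/
def Omega0 : (Fin 8 → ℝ) [⋀^Fin 4]→ₗ[ℝ] ℝ :=
  dxs ![0,1,2,3] + dxs ![0,1,4,5] + dxs ![0,1,6,7] + dxs ![0,2,4,6]
    - dxs ![0,2,5,7] - dxs ![0,3,4,7] - dxs ![0,3,5,6] - dxs ![1,2,4,7]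
    - dxs ![1,2,5,6] - dxs ![1,3,4,6] + dxs ![1,3,5,7] + dxs ![2,3,4,5]
    + dxs ![2,3,6,7] + dxs ![4,5,6,7]

/-- The `G₂` three-form `φ₀` written in the last seven coordinates of `ℝ⁸` and extended to `ℝ⁸`
annihilating `e₁`. -/
def phi0ext : (Fin 8 → ℝ) [⋀^Fin 3]→ₗ[ℝ] ℝ :=
  dxs ![1,2,3] + dxs ![1,4,5] + dxs ![1,6,7] + dxs ![2,4,6]
    - dxs ![2,5,7] - dxs ![3,4,7] - dxs ![3,5,6]

/-- The inclusion `ℝ⁷ ↪ ℝ⁸` onto the last seven coordinates. -/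
def incl7 : (Fin 7 → ℝ) →ₗ[ℝ] (Fin 8 → ℝ) :=
  LinearMap.pi fun i : Fin 8 =>
    Fin.cases (motive := fun _ => (Fin 7 → ℝ) →ₗ[ℝ] ℝ) 0 (fun j => LinearMap.proj j) i

variable {V : Type*} [NormedAddCommGroup V] [InnerProductSpace ℝ V] [FiniteDimensional ℝ V]

/-- `f : ℝ⁸ → V` is orientation-preserving. -/
def OrientedEquiv (o : Orientation ℝ V (Fin 8)) (f : (Fin 8 → ℝ) ≃ₗ[ℝ] V) : Prop :=
  Orientation.map (Fin 8) f ((Pi.basisFun ℝ (Fin 8)).orientation) = o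

/-- `f : ℝ⁸ → V` is an isometry for the standard inner product. -/
def IsometricEquiv (f : (Fin 8 → ℝ) ≃ₗ[ℝ] V) : Prop :=
  ∀ x y : Fin 8 → ℝ, ⟪f x, f y⟫ = ∑ i, x i * y i

/-- A four-form `Ω` on the oriented `8`-dimensional space `V` is *admissible* if some
orientation-preserving isomorphism `ℝ⁸ → V` pulls it back to the Cayley form `Ω₀`. -/
def AdmissibleForm (o : Orientation ℝ V (Fin 8)) (Ω : V [⋀^Fin 4]→ₗ[ℝ] ℝ) : Prop :=
  ∃ f : (Fin 8 → ℝ) ≃ₗ[ℝ] V, OrientedEquiv o f ∧ Ω.compLinearMap f.toLinearMap = Omega0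

/-- `Ω` is admissible and the inner product it induces is exactly the inner product of `V`. -/
def AdmissibleFormInducing (o : Orientation ℝ V (Fin 8)) (Ω : V [⋀^Fin 4]→ₗ[ℝ] ℝ) : Prop :=
  ∃ f : (Fin 8 → ℝ) ≃ₗ[ℝ] V, OrientedEquiv o f ∧ IsometricEquiv f ∧
    Ω.compLinearMap f.toLinearMap = Omega0

/-- The three-form `φ` on `V` (annihilating `v`) is, on the hyperplane `H` endowed with the
orientation induced by `o` and `v`, a positive three-form whose associated inner product is the
restriction of the inner product of `V`; moreover `v` is a unit vector orthogonal to `H`. -/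
def PositiveAdaptedInducing (o : Orientation ℝ V (Fin 8)) (φ : V [⋀^Fin 3]→ₗ[ℝ] ℝ)
    (v : V) (H : Submodule ℝ V) : Prop :=
  ∃ f : (Fin 8 → ℝ) ≃ₗ[ℝ] V, OrientedEquiv o f ∧ IsometricEquiv f ∧
    f (Pi.single 0 1) = v ∧ (∀ x : Fin 8 → ℝ, x 0 = 0 → f x ∈ H) ∧
    φ.compLinearMap f.toLinearMap = phi0ext

/-- The one-form `v♭ = ⟪v,·⟫`. -/
def flatForm (v : V) : V [⋀^Fin 1]→ₗ[ℝ] ℝ :=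
  AlternatingMap.ofSubsingleton ℝ V ℝ 0 (innerₗ V v)

/-- The inner product induced on `k`-forms on `V`, computed in an orthonormal basis. -/
def formInnerV (k : ℕ) (α β : V [⋀^Fin k]→ₗ[ℝ] ℝ) : ℝ :=
  (k.factorial : ℝ)⁻¹ *
    ∑ f : Fin k → Fin (Module.finrank ℝ V),
      α (fun j => stdOrthonormalBasis ℝ V (f j)) * β (fun j => stdOrthonormalBasis ℝ V (f j))

/-- The volume form of `(V, ⟪·,·⟫, o)`. -/
def volV (o : Orientation ℝ V (Fin 8)) (hd : Module.finrank ℝ V = 8) :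
    V [⋀^Fin 8]→ₗ[ℝ] ℝ :=
  letI : Fact (Module.finrank ℝ V = 8) := ⟨hd⟩
  o.volumeForm

/-- `ψ = ∗α` for `4`-forms on `V`, w.r.t. the inner product and orientation of `V`:
`γ ∧ ψ = ⟨γ, α⟩ vol` for every four-form `γ`. -/
def IsHodgeDualV (o : Orientation ℝ V (Fin 8)) (hd : Module.finrank ℝ V = 8)
    (α ψ : V [⋀^Fin 4]→ₗ[ℝ] ℝ) : Prop :=
  ∀ γ : V [⋀^Fin 4]→ₗ[ℝ] ℝ, wedgeAM γ ψ = formInnerV 4 γ α • volV o hd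

/-- The three-form `φ'` on `V` restricts, on the hyperplane `H` with the orientation induced by
`o` and `v`, to a positive three-form. -/
def PositiveOnHyperplane (o : Orientation ℝ V (Fin 8)) (φ' : V [⋀^Fin 3]→ₗ[ℝ] ℝ)
    (v : V) (H : Submodule ℝ V) : Prop :=
  ∃ f : (Fin 8 → ℝ) ≃ₗ[ℝ] V, OrientedEquiv o f ∧
    f (Pi.single 0 1) = v ∧ (∀ x : Fin 8 → ℝ, x 0 = 0 → f x ∈ H) ∧
    φ'.compLinearMap (f.toLinearMap ∘ₗ incl7) = phi0

/-!
Left multiplications `L_p` of octonions by imaginary octonions `p` satisfy the Clifford relations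
`L_p L_q + L_q L_p = -2⟨p, q⟩`, and the Cayley form is `6 Ω₀ = ∑ᵢ ωᵢ ∧ ωᵢ` for the Kähler forms
`ωᵢ = ⟨eᵢ · , ⟩` of the seven imaginary units. The Clifford relations say that pulling back by `L_p`
acts on the span of the `ωᵢ` as `-|p|²` times a reflection, so `L_p^* Ω₀ = |p|⁴ Ω₀`. Any nonzero
vector of `ℝ⁸` is moved to any other by some `L_p L_q`: choose `x ≠ 0` orthogonal to both; the
vectors `L_p x` fill the hyperplane `x^⊥`. As `L_p` is a multiple of a complex structure, it
preserves the orientation.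

Hence an admissible form becomes a multiple of `Ω₀` in an oriented frame whose first vector is `v`,
and `ι_v Ω` becomes a multiple of `φ₀` on the span of the other seven. Since `ι_v Ω` does not see
multiples of `v`, these seven may be projected to `H` along `v` and rescaled.
-/

section LinearAlgebra

variable {M : Type*} [AddCommGroup M] [Module ℝ M]

lemma det_pos_of_apply_apply_eq_neg_smul [FiniteDimensional ℝ M] {f : M →ₗ[ℝ] M} {c : ℝ}
    (hc : 0 < c) (hf : ∀ x, f (f x) = -c • x) : 0 < LinearMap.det f := by
  have hff : f * f = -c • 1 := LinearMap.ext hf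
  have hdet_ne : LinearMap.det f ≠ 0 := by
    intro h
    have := congrArg LinearMap.det hff
    rw [map_mul, h, zero_mul, LinearMap.det_smul, map_one, mul_one] at this
    exact pow_ne_zero _ (neg_ne_zero.2 hc.ne') this.symm
  -- `f / √c` is a complex structure `i`, and `2i = (1 + i)²`.
  have hsquare : (f + √c • 1) * (f + √c • 1) = (2 * √c) • f := by
    simp only [add_mul, mul_add, hff, smul_mul_assoc, mul_smul_comm, one_mul, mul_one]
    linear_combination (norm := module) Real.mul_self_sqrt hc.le • (1 : Module.End ℝ M)
  have hnonneg : 0 ≤ (2 * √c) ^ Module.finrank ℝ M * LinearMap.det f := by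
    rw [← LinearMap.det_smul, ← hsquare, map_mul]
    exact mul_self_nonneg _
  exact (nonneg_of_mul_nonneg_right hnonneg (by positivity)).lt_of_ne' hdet_ne

lemma exists_linearEquiv_eq_smul_add_smul_sub [FiniteDimensional ℝ M] {σ ρ : Module.Dual ℝ M}
    {v : M} (hσ : σ v = 1) (hρ : ρ v = 1) {c : ℝ} (hc : 0 < c) :
    ∃ T : M ≃ₗ[ℝ] M, 0 < LinearMap.det T.toLinearMap ∧
      ∀ x, T x = σ x • v + c • (x - ρ x • v) := by
  let t := c • LinearMap.transvection (c⁻¹ • σ - ρ) v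
  have ht : 0 < LinearMap.det t := by
    have : LinearMap.det t = c ^ Module.finrank ℝ M * c⁻¹ := by
      simp [t, LinearMap.det_smul, hσ, hρ]
    rw [this]
    positivity
  refine ⟨LinearMap.equivOfDetNeZero t ht.ne', ht, fun x => ?_⟩
  change c • (x + (c⁻¹ * σ x - ρ x) • v) = _
  rw [sub_smul, smul_add, smul_sub, smul_smul, mul_inv_cancel_left₀ hc.ne']
  module

lemma exists_dual_ker_eq {K N : Type*} [Field K] [AddCommGroup N] [Module K N]
    [FiniteDimensional K N] {H : Submodule K N}
    (hH : Module.finrank K H + 1 = Module.finrank K N) {v : N} (hv : v ∉ H) :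
    ∃ ρ : Module.Dual K N, ρ v = 1 ∧ LinearMap.ker ρ = H := by
  obtain ⟨g, hgv, hHg⟩ := Submodule.exists_le_ker_of_notMem hv
  have hg : g ≠ 0 := fun h => hgv (by simp [h])
  have hker : H = LinearMap.ker g := by
    refine Submodule.eq_of_le_of_finrank_eq hHg ?_
    have := Module.Dual.finrank_ker_add_one_of_ne_zero hg
    omega
  exact ⟨(g v)⁻¹ • g, by simp [hgv], by rw [LinearMap.ker_smul _ _ (inv_ne_zero hgv), hker]⟩

end LinearAlgebra

section AlternatingMap

variable {R M M' N : Type*} [CommRing R] [AddCommGroup M] [Module R M] [AddCommGroup M']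
  [Module R M'] [AddCommGroup N] [Module R N] {n : ℕ}

lemma smul_compLinearMap {ι : Type*} (c : R) (ω : M [⋀^ι]→ₗ[R] N) (g : M' →ₗ[R] M) :
    (c • ω).compLinearMap g = c • ω.compLinearMap g := rfl

lemma curryLeft_apply_eq_zero_of_eq_smul (ω : M [⋀^Fin (n + 1)]→ₗ[R] N) {v : M}
    {m : Fin n → M} {i : Fin n} {t : R} (hi : m i = t • v) : ω.curryLeft v m = 0 := by
  rw [← Function.update_eq_self i m, hi, AlternatingMap.map_update_smul,
    AlternatingMap.curryLeft_apply_apply,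
    ω.map_eq_zero_of_eq _ (by simp) (Fin.succ_ne_zero i).symm, smul_zero]

lemma curryLeft_apply_add_smul (ω : M [⋀^Fin (n + 1)]→ₗ[R] N) (v : M) (m : Fin n → M)
    (t : Fin n → R) : ω.curryLeft v (m + fun i => t i • v) = ω.curryLeft v m := by
  refine ((ω.curryLeft v).toMultilinearMap.map_add_univ m _).trans ?_
  rw [Finset.sum_eq_single_of_mem Finset.univ (Finset.mem_univ _), Finset.piecewise_univ]
  · rfl
  · intro s _ hs
    obtain ⟨i, hi⟩ : ∃ i, i ∉ s := by simpa [Finset.eq_univ_iff_forall] using hs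
    exact curryLeft_apply_eq_zero_of_eq_smul ω (s.piecewise_eq_of_notMem _ _ hi)

lemma curryLeft_compLinearMap_eq_pow_smul (ω : M [⋀^Fin (n + 1)]→ₗ[R] N) {v : M}
    {g h : M' →ₗ[R] M} {c : R} {t : M' → R} (hgh : ∀ x, g x = c • h x + t x • v) :
    (ω.curryLeft v).compLinearMap g = c ^ n • (ω.curryLeft v).compLinearMap h := by
  ext m
  calc ω.curryLeft v (fun i => g (m i))
    _ = ω.curryLeft v ((fun i => c • h (m i)) + fun i => t (m i) • v) := by
      simp only [hgh]; rfl
    _ = ω.curryLeft v (fun i => c • h (m i)) := curryLeft_apply_add_smul ω v _ _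
    _ = c ^ n • ω.curryLeft v (fun i => h (m i)) := by
      simpa using (ω.curryLeft v).map_smul_univ (fun _ => c) fun i => h (m i)

end AlternatingMap

section CliffordAction

open Matrix

variable {ι n : Type*} [Fintype ι] [Fintype n]

/-- A Euclidean Clifford module structure on `ℝⁿ`: the vectors of `ℝ^ι` act by skew-symmetric
endomorphisms, and `p` squares to `-|p|²`. Both inner products are dot products. -/
structure IsCliffordAction (L : (ι → ℝ) →ₗ[ℝ] (n → ℝ) →ₗ[ℝ] n → ℝ) : Prop where
  dotProduct_skew : ∀ p a b, L p a ⬝ᵥ b = -(a ⬝ᵥ L p b)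
  apply_apply_self : ∀ p a, L p (L p a) = -(p ⬝ᵥ p) • a

/-- The `ℝ^ι`-valued two-form `(ωᵢ)` of a Clifford action, where `ωᵢ(a, b) = ⟨eᵢ · a, b⟩` is the
Kähler form of the complex structure given by the `i`-th basis vector. -/
def kahlerForms [DecidableEq ι] (L : (ι → ℝ) →ₗ[ℝ] (n → ℝ) →ₗ[ℝ] n → ℝ) (a b : n → ℝ) : ι → ℝ :=
  fun i => L (Pi.single i 1) a ⬝ᵥ b

/-- The four-form `½ ∑ᵢ ωᵢ ∧ ωᵢ` built from the Kähler forms of a Clifford action, as a function of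
four vectors. -/
def kahlerFourForm [DecidableEq ι] (L : (ι → ℝ) →ₗ[ℝ] (n → ℝ) →ₗ[ℝ] n → ℝ)
    (a b c d : n → ℝ) : ℝ :=
  kahlerForms L a b ⬝ᵥ kahlerForms L c d - kahlerForms L a c ⬝ᵥ kahlerForms L b d
    + kahlerForms L a d ⬝ᵥ kahlerForms L b c

lemma dotProduct_kahlerForms [DecidableEq ι] (L : (ι → ℝ) →ₗ[ℝ] (n → ℝ) →ₗ[ℝ] n → ℝ)
    (p : ι → ℝ) (a b : n → ℝ) : p ⬝ᵥ kahlerForms L a b = L p a ⬝ᵥ b := by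
  have hp : p = ∑ i, p i • Pi.single i 1 := by simpa using ((Pi.basisFun ℝ ι).sum_repr p).symm
  conv_rhs => rw [hp, map_sum, LinearMap.sum_apply, sum_dotProduct]
  exact Finset.sum_congr rfl fun i _ => by simp [kahlerForms]

lemma dotProduct_self_pos {x : n → ℝ} (hx : x ≠ 0) : 0 < x ⬝ᵥ x := by
  simpa using dotProduct_star_self_pos_iff.2 hx

lemma exists_ne_zero_dotProduct_eq_zero_and_eq_zero (hn : 2 < Fintype.card n) (u w : n → ℝ) :
    ∃ x ≠ 0, u ⬝ᵥ x = 0 ∧ w ⬝ᵥ x = 0 := by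
  let g : (n → ℝ) →ₗ[ℝ] ℝ × ℝ := (dotProductBilin ℝ ℝ u).prod (dotProductBilin ℝ ℝ w)
  have hker : LinearMap.ker g ≠ ⊥ := LinearMap.ker_ne_bot_of_finrank_lt (by simpa using hn)
  obtain ⟨x, hx, hx0⟩ := Submodule.exists_mem_ne_zero_of_ne_bot hker
  have hgx : (u ⬝ᵥ x, w ⬝ᵥ x) = 0 := hx
  exact ⟨x, hx0, Prod.ext_iff.1 hgx⟩

namespace IsCliffordAction

variable {L : (ι → ℝ) →ₗ[ℝ] (n → ℝ) →ₗ[ℝ] n → ℝ}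

lemma apply_apply_comm (hL : IsCliffordAction L) (p q : ι → ℝ) (a : n → ℝ) :
    L q (L p a) = -L p (L q a) - (2 * (p ⬝ᵥ q)) • a := by
  have h := hL.apply_apply_self (p + q) a
  simp only [map_add, LinearMap.add_apply, hL.apply_apply_self, add_dotProduct, dotProduct_add,
    dotProduct_comm q p] at h
  linear_combination (norm := module) h

lemma apply_dotProduct_apply (hL : IsCliffordAction L) (p : ι → ℝ) (a b : n → ℝ) :
    L p a ⬝ᵥ L p b = (p ⬝ᵥ p) * (a ⬝ᵥ b) := by
  rw [hL.dotProduct_skew, hL.apply_apply_self, dotProduct_smul, smul_eq_mul]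
  ring

lemma apply_dotProduct_self (hL : IsCliffordAction L) (p : ι → ℝ) (a : n → ℝ) : L p a ⬝ᵥ a = 0 := by
  have h := hL.dotProduct_skew p a a
  rw [dotProduct_comm a] at h
  linarith

lemma det_pos (hL : IsCliffordAction L) {p : ι → ℝ} (hp : p ≠ 0) : 0 < LinearMap.det (L p) :=
  det_pos_of_apply_apply_eq_neg_smul (dotProduct_self_pos hp) (hL.apply_apply_self p)

lemma exists_apply_eq (hL : IsCliffordAction L) (hcard : Fintype.card n = Fintype.card ι + 1)
    {x w : n → ℝ} (hx : x ≠ 0) (hwx : w ⬝ᵥ x = 0) : ∃ p, L p x = w := by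
  have hxx : x ⬝ᵥ x ≠ 0 := (dotProduct_self_pos hx).ne'
  let g : ℝ × (ι → ℝ) →ₗ[ℝ] n → ℝ := (LinearMap.toSpanSingleton ℝ _ x).coprod (L.flip x)
  have hg : ∀ s p, g (s, p) = s • x + L p x := fun _ _ => by simp [g]
  have hdot : ∀ s p, g (s, p) ⬝ᵥ x = s * (x ⬝ᵥ x) := fun s p => by
    rw [hg, add_dotProduct, smul_dotProduct, hL.apply_dotProduct_self, add_zero, smul_eq_mul]
  have hinj : Function.Injective g := by
    rw [injective_iff_map_eq_zero]
    rintro ⟨s, p⟩ h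
    have hs : s = 0 := by simpa [h, hxx] using (hdot s p).symm
    have hpx : L p x = 0 := by simpa [hg, hs] using h
    have hp : p = 0 := by simpa [hpx, hxx] using (hL.apply_dotProduct_apply p x x).symm
    rw [hs, hp, Prod.mk_zero_zero]
  have hsurj : Function.Surjective g :=
    (LinearMap.injective_iff_surjective_of_finrank_eq_finrank (by simp [hcard, add_comm])).1 hinj
  obtain ⟨⟨s, p⟩, rfl⟩ := hsurj w
  have hs : s = 0 := by simpa [hxx, hwx] using (hdot s p).symm
  exact ⟨p, by rw [hg, hs, zero_smul, zero_add]⟩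

lemma exists_apply_apply_eq (hL : IsCliffordAction L)
    (hcard : Fintype.card n = Fintype.card ι + 1) (hn : 2 < Fintype.card n) {u w : n → ℝ}
    (hu : u ≠ 0) (hw : w ≠ 0) :
    ∃ p ≠ 0, ∃ q ≠ 0, L p (L q u) = w := by
  obtain ⟨x, hx, hux, hwx⟩ := exists_ne_zero_dotProduct_eq_zero_and_eq_zero hn u w
  obtain ⟨q, rfl⟩ := hL.exists_apply_eq hcard hu ((dotProduct_comm _ _).trans hux)
  obtain ⟨p, rfl⟩ := hL.exists_apply_eq hcard hx hwx
  exact ⟨p, by rintro rfl; simp at hw, q, by rintro rfl; simp at hx, rfl⟩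

variable [DecidableEq ι]

-- Up to the factor `-|p|²`, this is the reflection of `kahlerForms L a b` in the hyperplane `p^⊥`.
lemma kahlerForms_apply_apply (hL : IsCliffordAction L) (p : ι → ℝ) (a b : n → ℝ) :
    kahlerForms L (L p a) (L p b) =
      (2 * (p ⬝ᵥ kahlerForms L a b)) • p - (p ⬝ᵥ p) • kahlerForms L a b := by
  refine dotProduct_eq _ _ fun q => ?_
  rw [dotProduct_comm]
  calc q ⬝ᵥ kahlerForms L (L p a) (L p b)
    _ = L q (L p a) ⬝ᵥ L p b := dotProduct_kahlerForms L q _ _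
    _ = -(L p (L q a) ⬝ᵥ L p b) - 2 * (p ⬝ᵥ q) * (a ⬝ᵥ L p b) := by
      rw [hL.apply_apply_comm, sub_dotProduct, neg_dotProduct, smul_dotProduct, smul_eq_mul]
    _ = 2 * (p ⬝ᵥ q) * (L p a ⬝ᵥ b) - (p ⬝ᵥ p) * (L q a ⬝ᵥ b) := by
      rw [hL.apply_dotProduct_apply, hL.dotProduct_skew p a b]
      ring
    _ = ((2 * (p ⬝ᵥ kahlerForms L a b)) • p - (p ⬝ᵥ p) • kahlerForms L a b) ⬝ᵥ q := by
      rw [sub_dotProduct, smul_dotProduct, smul_dotProduct, dotProduct_comm (kahlerForms L a b) q,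
        dotProduct_kahlerForms, dotProduct_kahlerForms, smul_eq_mul, smul_eq_mul]
      ring

lemma kahlerForms_dotProduct_kahlerForms (hL : IsCliffordAction L) (p : ι → ℝ) (a b c d : n → ℝ) :
    kahlerForms L (L p a) (L p b) ⬝ᵥ kahlerForms L (L p c) (L p d) =
      (p ⬝ᵥ p) ^ 2 * (kahlerForms L a b ⬝ᵥ kahlerForms L c d) := by
  simp only [hL.kahlerForms_apply_apply, sub_dotProduct, dotProduct_sub, smul_dotProduct,
    dotProduct_smul, smul_eq_mul, dotProduct_comm _ p]
  ring

lemma kahlerFourForm_apply (hL : IsCliffordAction L) (p : ι → ℝ) (a b c d : n → ℝ) :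
    kahlerFourForm L (L p a) (L p b) (L p c) (L p d) =
      (p ⬝ᵥ p) ^ 2 * kahlerFourForm L a b c d := by
  simp only [kahlerFourForm, hL.kahlerForms_dotProduct_kahlerForms]
  ring

end IsCliffordAction

end CliffordAction

section CayleyForm

open Matrix

/-- Left multiplication of octonions by imaginary octonions, in the basis `1, e₁, …, e₇` of `ℝ⁸`
and the basis `e₁, …, e₇` of `ℝ⁷` in which `⟨p · y, z⟩ = φ₀(p, y, z)` for `p, y, z` imaginary. -/
def octonionAction : (Fin 7 → ℝ) →ₗ[ℝ] (Fin 8 → ℝ) →ₗ[ℝ] Fin 8 → ℝ :=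
  LinearMap.mk₂ ℝ (fun p x => ![
      -p 0 * x 1 - p 1 * x 2 - p 2 * x 3 - p 3 * x 4 - p 4 * x 5 - p 5 * x 6 - p 6 * x 7,
      p 0 * x 0 - p 2 * x 2 + p 1 * x 3 - p 4 * x 4 + p 3 * x 5 - p 6 * x 6 + p 5 * x 7,
      p 1 * x 0 + p 2 * x 1 - p 0 * x 3 - p 5 * x 4 + p 6 * x 5 + p 3 * x 6 - p 4 * x 7,
      p 2 * x 0 - p 1 * x 1 + p 0 * x 2 + p 6 * x 4 + p 5 * x 5 - p 4 * x 6 - p 3 * x 7,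
      p 3 * x 0 + p 4 * x 1 + p 5 * x 2 - p 6 * x 3 - p 0 * x 5 - p 1 * x 6 + p 2 * x 7,
      p 4 * x 0 - p 3 * x 1 - p 6 * x 2 - p 5 * x 3 + p 0 * x 4 + p 2 * x 6 + p 1 * x 7,
      p 5 * x 0 + p 6 * x 1 - p 3 * x 2 + p 4 * x 3 + p 1 * x 4 - p 2 * x 5 - p 0 * x 7,
      p 6 * x 0 - p 5 * x 1 + p 4 * x 2 + p 3 * x 3 - p 2 * x 4 - p 1 * x 5 + p 0 * x 6])
    (fun _ _ _ => by ext i; fin_cases i <;> simp <;> ring)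
    (fun _ _ _ => by ext i; fin_cases i <;> simp <;> ring)
    (fun _ _ _ => by ext i; fin_cases i <;> simp <;> ring)
    (fun _ _ _ => by ext i; fin_cases i <;> simp <;> ring)

lemma isCliffordAction_octonionAction : IsCliffordAction octonionAction where
  dotProduct_skew p a b := by
    simp [octonionAction, dotProduct, Fin.sum_univ_succ]
    ring
  apply_apply_self p a := by
    ext i
    fin_cases i <;> simp [octonionAction, dotProduct, Fin.sum_univ_succ] <;> ring

lemma dxs_apply_s8 {n k : ℕ} (idx : Fin k → Fin n) (m : Fin k → Fin n → ℝ) :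
    dxs idx m = det (of fun i j => m i (idx j)) := rfl

lemma dxs_apply_four {n : ℕ} (i j k l : Fin n) (m : Fin 4 → Fin n → ℝ) :
    dxs ![i, j, k, l] m =
      (m 0 i * m 1 j - m 0 j * m 1 i) * (m 2 k * m 3 l - m 2 l * m 3 k)
      - (m 0 i * m 1 k - m 0 k * m 1 i) * (m 2 j * m 3 l - m 2 l * m 3 j)
      + (m 0 i * m 1 l - m 0 l * m 1 i) * (m 2 j * m 3 k - m 2 k * m 3 j)
      + (m 0 j * m 1 k - m 0 k * m 1 j) * (m 2 i * m 3 l - m 2 l * m 3 i)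
      - (m 0 j * m 1 l - m 0 l * m 1 j) * (m 2 i * m 3 k - m 2 k * m 3 i)
      + (m 0 k * m 1 l - m 0 l * m 1 k) * (m 2 i * m 3 j - m 2 j * m 3 i) := by
  simp [dxs_apply_s8, det_succ_row_zero, Fin.sum_univ_succ, Fin.succAbove]
  ring

lemma curryLeft_Omega0_compLinearMap_incl7 :
    (Omega0.curryLeft (Pi.single 0 1)).compLinearMap incl7 = phi0 := by
  ext y
  have hincl : ∀ z : Fin 7 → ℝ, incl7 z = vecCons 0 z := fun z => by
    ext i; fin_cases i <;> rfl
  simp only [Omega0, phi0, AlternatingMap.compLinearMap_apply,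
    AlternatingMap.curryLeft_apply_apply, AlternatingMap.add_apply, AlternatingMap.sub_apply,
    dxs_apply_four, hincl]
  simp [dxs_apply_s8, det_fin_three]
  ring

lemma kahlerForms_octonionAction (a b : Fin 8 → ℝ) : kahlerForms octonionAction a b = ![
    a 0 * b 1 - a 1 * b 0 + (a 2 * b 3 - a 3 * b 2) + (a 4 * b 5 - a 5 * b 4)
      + (a 6 * b 7 - a 7 * b 6),
    a 0 * b 2 - a 2 * b 0 + (a 3 * b 1 - a 1 * b 3) + (a 4 * b 6 - a 6 * b 4)
      - (a 5 * b 7 - a 7 * b 5),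
    a 0 * b 3 - a 3 * b 0 + (a 1 * b 2 - a 2 * b 1) - (a 4 * b 7 - a 7 * b 4)
      - (a 5 * b 6 - a 6 * b 5),
    a 0 * b 4 - a 4 * b 0 - (a 1 * b 5 - a 5 * b 1) - (a 2 * b 6 - a 6 * b 2)
      + (a 3 * b 7 - a 7 * b 3),
    a 0 * b 5 - a 5 * b 0 + (a 1 * b 4 - a 4 * b 1) + (a 2 * b 7 - a 7 * b 2)
      + (a 3 * b 6 - a 6 * b 3),
    a 0 * b 6 - a 6 * b 0 - (a 1 * b 7 - a 7 * b 1) + (a 2 * b 4 - a 4 * b 2)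
      - (a 3 * b 5 - a 5 * b 3),
    a 0 * b 7 - a 7 * b 0 + (a 1 * b 6 - a 6 * b 1) - (a 2 * b 5 - a 5 * b 2)
      - (a 3 * b 4 - a 4 * b 3)] := by
  ext i
  fin_cases i <;> simp [kahlerForms, octonionAction, dotProduct, Fin.sum_univ_succ] <;> ring

lemma kahlerFourForm_octonionAction (m : Fin 4 → Fin 8 → ℝ) :
    kahlerFourForm octonionAction (m 0) (m 1) (m 2) (m 3) = 3 * Omega0 m := by
  simp only [kahlerFourForm, kahlerForms_octonionAction, Omega0, AlternatingMap.add_apply,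
    AlternatingMap.sub_apply, dxs_apply_four, dotProduct, Fin.sum_univ_succ]
  simp
  ring

lemma Omega0_compLinearMap_octonionAction (p : Fin 7 → ℝ) :
    Omega0.compLinearMap (octonionAction p) = (p ⬝ᵥ p) ^ 2 • Omega0 := by
  ext m
  have h := isCliffordAction_octonionAction.kahlerFourForm_apply p (m 0) (m 1) (m 2) (m 3)
  rw [kahlerFourForm_octonionAction m,
    kahlerFourForm_octonionAction fun i => octonionAction p (m i)] at h
  simp only [AlternatingMap.compLinearMap_apply, AlternatingMap.smul_apply, smul_eq_mul]
  linarith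

lemma exists_conformal_Omega0 {u w : Fin 8 → ℝ} (hu : u ≠ 0) (hw : w ≠ 0) :
    ∃ (B : (Fin 8 → ℝ) ≃ₗ[ℝ] (Fin 8 → ℝ)) (K : ℝ), 0 < K ∧ 0 < LinearMap.det B.toLinearMap ∧
      B u = w ∧ Omega0.compLinearMap B.toLinearMap = K • Omega0 := by
  have hL := isCliffordAction_octonionAction
  obtain ⟨p, hp, q, hq, hpq⟩ := hL.exists_apply_apply_eq (by simp) (by simp) hu hw
  let B := octonionAction p ∘ₗ octonionAction q
  have hB : 0 < LinearMap.det B := by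
    rw [LinearMap.det_comp]
    exact mul_pos (hL.det_pos hp) (hL.det_pos hq)
  have hpp := dotProduct_self_pos hp
  have hqq := dotProduct_self_pos hq
  refine ⟨LinearMap.equivOfDetNeZero B hB.ne', (p ⬝ᵥ p) ^ 2 * (q ⬝ᵥ q) ^ 2, by positivity, hB,
    hpq, ?_⟩
  change Omega0.compLinearMap B = _
  rw [← AlternatingMap.compLinearMap_assoc, Omega0_compLinearMap_octonionAction,
    smul_compLinearMap, Omega0_compLinearMap_octonionAction, smul_smul]

end CayleyForm

section OrientedEquiv

variable {W : Type*} [NormedAddCommGroup W] [InnerProductSpace ℝ W]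

lemma OrientedEquiv.trans_of_det_pos {o : Orientation ℝ W (Fin 8)} {f : (Fin 8 → ℝ) ≃ₗ[ℝ] W}
    (hf : OrientedEquiv o f) {T : (Fin 8 → ℝ) ≃ₗ[ℝ] (Fin 8 → ℝ)}
    (hT : 0 < LinearMap.det T.toLinearMap) : OrientedEquiv o (T.trans f) := by
  let e := Pi.basisFun ℝ (Fin 8)
  calc Orientation.map (Fin 8) (T.trans f) e.orientation
    _ = ((e.map T).map f).orientation := (e.orientation_map (T.trans f)).symm
    _ = Orientation.map (Fin 8) f (e.map T).orientation := (e.map T).orientation_map f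
    _ = Orientation.map (Fin 8) f e.orientation := by
      rw [(e.orientation_comp_linearEquiv_eq_iff_det_pos T).2 hT]
    _ = o := hf

lemma AdmissibleForm.exists_curryLeft_compLinearMap_eq_smul_phi0
    {o : Orientation ℝ W (Fin 8)} {Ω : W [⋀^Fin 4]→ₗ[ℝ] ℝ} (hΩ : AdmissibleForm o Ω) {v : W}
    (hv : v ≠ 0) :
    ∃ (f : (Fin 8 → ℝ) ≃ₗ[ℝ] W) (K : ℝ), 0 < K ∧ OrientedEquiv o f ∧ f (Pi.single 0 1) = v ∧
      (Ω.curryLeft v).compLinearMap (f.toLinearMap ∘ₗ incl7) = K • phi0 := by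
  obtain ⟨f, hf, hfΩ⟩ := hΩ
  obtain ⟨B, K, hK, hdet, hBv, hBΩ⟩ := exists_conformal_Omega0 (u := Pi.single 0 1)
    (w := f.symm v) (by simp) (by simpa using hv)
  let g := B.trans f
  have hgv : g.toLinearMap (Pi.single 0 1) = v := by simp [g, hBv]
  have hgΩ : Ω.compLinearMap g.toLinearMap = K • Omega0 := by
    rw [← hBΩ, ← hfΩ]
    rfl
  refine ⟨g, K, hK, hf.trans_of_det_pos hdet, hgv, ?_⟩
  rw [← AlternatingMap.compLinearMap_assoc, ← hgv, ← AlternatingMap.curryLeft_compLinearMap, hgΩ,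
    AlternatingMap.curryLeft_smul, LinearMap.smul_apply, smul_compLinearMap,
    curryLeft_Omega0_compLinearMap_incl7]

end OrientedEquiv

/-- If `Ω` is an admissible four-form on the oriented 8-dimensional space `V`,
then for every nonzero `v ∈ V` and every 7-dimensional subspace `H` transverse to `v`, the
restriction `(ι_v Ω)|_H` is a positive three-form on `H` (with the orientation induced by that
of `V` and `v`). -/
theorem positive_restriction_of_admissible
    (o : Orientation ℝ V (Fin 8)) (hd : Module.finrank ℝ V = 8)
    (Ω : V [⋀^Fin 4]→ₗ[ℝ] ℝ) (hΩ : AdmissibleForm o Ω)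
    (v : V) (hv : v ≠ 0) (H : Submodule ℝ V) (hH : Module.finrank ℝ H = 7) (htrans : v ∉ H) :
    PositiveOnHyperplane o (Ω.curryLeft v) v H := by
  obtain ⟨f, K, hK, hf, hfv, hfΩ⟩ := hΩ.exists_curryLeft_compLinearMap_eq_smul_phi0 hv
  obtain ⟨ρ, hρv, hρH⟩ := exists_dual_ker_eq (by rw [hH, hd]) htrans
  obtain ⟨c, hc, hcK⟩ : ∃ c : ℝ, 0 < c ∧ c ^ 3 = K⁻¹ :=
    ⟨K⁻¹ ^ ((3 : ℕ) : ℝ)⁻¹, by positivity, Real.rpow_inv_natCast_pow (by positivity) (by simp)⟩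
  obtain ⟨T, hTdet, hT⟩ := exists_linearEquiv_eq_smul_add_smul_sub
    (σ := LinearMap.proj 0) (ρ := ρ ∘ₗ f.toLinearMap) (v := Pi.single 0 1) (by simp)
    (by simp [hfv, hρv]) hc
  have hfT : ∀ x, f (T x) = x 0 • v + c • (f x - ρ (f x) • v) := fun x => by simp [hT, hfv]
  have hfT_incl7 : ∀ y, ((T.trans f).toLinearMap ∘ₗ incl7) y =
      c • (f.toLinearMap ∘ₗ incl7) y + -(c * ρ (f (incl7 y))) • v := fun y => by
    have hy : incl7 y 0 = 0 := rfl
    simp [hfT, hy, smul_smul, sub_eq_add_neg]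
  refine ⟨T.trans f, hf.trans_of_det_pos hTdet, by simp [hfT, hfv, hρv], fun x hx => ?_, ?_⟩
  · rw [← hρH, LinearMap.mem_ker, LinearEquiv.trans_apply, hfT, hx]
    simp [hρv]
  · rw [curryLeft_compLinearMap_eq_pow_smul Ω hfT_incl7, hfΩ, hcK, inv_smul_smul₀ hK.ne']

end
end
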